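/- Any 3-form T on an oriented 5-dimensional real inner product space admits an oriented orthonormal basis e_1,...,e_5 such that T = -(ρ e₁∧e₂∧e₅ + λ e₃∧e₄∧e₅) for some real constants ρ, λ; and for such T one has *T = -(ρ e₃∧e₄ + λ e₁∧e₂) and σ_T = ρλ e₁∧e₂∧e₃∧e₄. -/

import Mathlib

/-!
Every 3-form `T` in dimension five is divisible by a 1-form. Indeed `v ↦ v♭ ∧ T`, read through
`Λ⁴ ≅ V`, is given by a skew 5 × 5 matrix, which is singular because five is odd; a unit vector `v`
with `v♭ ∧ T = 0` satisfies `T = v♭ ∧ (v ⨼ T)` (`exists_divisor`). The 2-form `ω = v ⨼ T` has `v`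
in its kernel, and splits orthogonally into planes: if `A` is the skew operator representing `ω` and
`u` is an eigenvector of the symmetric operator `A²` with nonzero eigenvalue, then the plane spanned
by `u` and `A u` is `A`-invariant and orthogonal to `v`, and so is its complement in `v^⊥`
(`skew_normal_form`). With `b 4 = v`, only the components of `T` on `(0, 1, 4)` and `(2, 3, 4)`
survive. Negating the whole basis preserves this and reverses the orientation, so the basis may be
taken positively oriented (`exists_positive_adapted`). The formulas for the Hodge dual and for
`σ_T` are then computations in coordinates.
-/

/- STATEMENT 8: Any 3-form T on an oriented 5-dimensional real inner product space admits an
oriented (i.e. positively oriented) orthonormal basis e₁,...,e₅ such that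
T = -(ρ e₁∧e₂∧e₅ + λ e₃∧e₄∧e₅) for some real constants ρ, λ; and then
*T = -(ρ e₃∧e₄ + λ e₁∧e₂) and σ_T = ρλ e₁∧e₂∧e₃∧e₄.

We take the oriented 5-dimensional inner product space to be V = EuclideanSpace ℝ (Fin 5)
with its standard orientation; a basis b is positively oriented iff the matrix of the
coordinates of the b i in the standard basis has positive determinant. Wedge products of
dual basis 1-forms are expressed as determinants of coordinate matrices, the Hodge star is
computed in the orthonormal basis b by
(*T)(X,Y) = (1/3!) Σ_{i,j,k} T(b i,b j,b k) · (b^i ∧ b^j ∧ b^k ∧ b^X? )  — precisely, via the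
determinant formula `eps` below, and σ_T(X,Y,Z,W) = Σ_cyclic{X,Y,Z} ⟨T(X,Y,·)♯,T(Z,W,·)♯⟩. -/

open scoped RealInnerProductSpace

noncomputable section

abbrev V5 := EuclideanSpace ℝ (Fin 5)

/-- coordinates with respect to an orthonormal basis -/
def c (b : OrthonormalBasis (Fin 5) ℝ V5) (X : V5) (i : Fin 5) : ℝ := ⟪X, b i⟫

/-- `(b^{i₁} ∧ b^{i₂} ∧ b^{i₃})(X,Y,Z)` as a determinant of coordinates -/
def d3 (b : OrthonormalBasis (Fin 5) ℝ V5) (idx : Fin 3 → Fin 5) (X Y Z : V5) : ℝ :=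
  Matrix.det (Matrix.of fun p q => c b (![X, Y, Z] p) (idx q))

/-- `(b^{i₁} ∧ b^{i₂})(X,Y)` -/
def d2 (b : OrthonormalBasis (Fin 5) ℝ V5) (idx : Fin 2 → Fin 5) (X Y : V5) : ℝ :=
  Matrix.det (Matrix.of fun p q => c b (![X, Y] p) (idx q))

/-- `(b^{i₁} ∧ b^{i₂} ∧ b^{i₃} ∧ b^{i₄})(X,Y,Z,W)` -/
def d4 (b : OrthonormalBasis (Fin 5) ℝ V5) (idx : Fin 4 → Fin 5) (X Y Z W : V5) : ℝ :=
  Matrix.det (Matrix.of fun p q => c b (![X, Y, Z, W] p) (idx q))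

/-- `(b^i ∧ b^j ∧ b^k ∧ ξ_X ∧ ξ_Y)` evaluated on the basis: the determinant whose first three
rows are the indicator rows of i,j,k and whose last two rows are the b-coordinates of X,Y. -/
def eps (b : OrthonormalBasis (Fin 5) ℝ V5) (i j k : Fin 5) (X Y : V5) : ℝ :=
  Matrix.det (Matrix.of fun p q =>
    ![(fun q => if q = i then (1 : ℝ) else 0),
      (fun q => if q = j then (1 : ℝ) else 0),
      (fun q => if q = k then (1 : ℝ) else 0),
      c b X, c b Y] p q)

/-- the Hodge dual 2-form of the 3-form `T`, computed in the orthonormal basis `b` -/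
def star3 (b : OrthonormalBasis (Fin 5) ℝ V5) (T : AlternatingMap ℝ V5 ℝ (Fin 3))
    (X Y : V5) : ℝ :=
  (1 / 6) * ∑ i : Fin 5, ∑ j : Fin 5, ∑ k : Fin 5, T ![b i, b j, b k] * eps b i j k X Y

/-- `σ_T(X,Y,Z,W) = Σ_cyclic{X,Y,Z} ⟨T(X,Y,·)♯, T(Z,W,·)♯⟩` -/
def sigmaT (b : OrthonormalBasis (Fin 5) ℝ V5) (T : AlternatingMap ℝ V5 ℝ (Fin 3))
    (X Y Z W : V5) : ℝ :=
  ∑ i : Fin 5,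
    (T ![X, Y, b i] * T ![Z, W, b i]
      + T ![Y, Z, b i] * T ![X, W, b i]
      + T ![Z, X, b i] * T ![Y, W, b i])

/-- `b` is positively oriented with respect to the standard orientation -/
def PositivelyOriented (b : OrthonormalBasis (Fin 5) ℝ V5) : Prop :=
  0 < Matrix.det (Matrix.of fun i j : Fin 5 => ⟪b i, EuclideanSpace.single j (1 : ℝ)⟫)

/-! ### Coordinate expansion of a 3-form -/

lemma alt_swap01 (T : AlternatingMap ℝ V5 ℝ (Fin 3)) (X Y Z : V5) :
    T ![X, Y, Z] = -T ![Y, X, Z] := by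
  have h := T.map_swap ![Y, X, Z] (show (0 : Fin 3) ≠ 1 by decide)
  rw [← h]
  congr 1
  ext i : 1
  fin_cases i <;> rfl

lemma alt_swap12 (T : AlternatingMap ℝ V5 ℝ (Fin 3)) (X Y Z : V5) :
    T ![X, Y, Z] = -T ![X, Z, Y] := by
  have h := T.map_swap ![X, Z, Y] (show (1 : Fin 3) ≠ 2 by decide)
  rw [← h]
  congr 1
  ext i : 1
  fin_cases i <;> rfl

lemma alt_sum_smul (T : AlternatingMap ℝ V5 ℝ (Fin 3)) (x : Fin 5 → ℝ) (e : Fin 5 → V5)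
    (Y Z : V5) : T ![∑ i, x i • e i, Y, Z] = ∑ i, x i * T ![e i, Y, Z] := by
  have h := T.toMultilinearMap.cons_smul
  have h' := T.toMultilinearMap.cons_add
  let L : V5 →ₗ[ℝ] ℝ :=
    { toFun := fun X => T ![X, Y, Z]
      map_add' := fun a b => h' ![Y, Z] a b
      map_smul' := fun a b => h ![Y, Z] a b }
  change L (∑ i, x i • e i) = ∑ i, x i * L (e i)
  simp only [map_sum, map_smul, smul_eq_mul]

/-- The sum of a totally antisymmetric array of coefficients, collected over increasing
triples of indices. -/
lemma sum_antisymm (t : Fin 5 → Fin 5 → Fin 5 → ℝ) (h1 : ∀ i j k, t i j k = -t j i k)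
    (h2 : ∀ i j k, t i j k = -t i k j) (x y z : Fin 5 → ℝ) :
    ∑ i, x i * ∑ j, y j * ∑ k, z k * t i j k =
      let D := fun i j k : Fin 5 =>
        x i * (y j * z k - y k * z j) - x j * (y i * z k - y k * z i)
          + x k * (y i * z j - y j * z i)
      t 0 1 2 * D 0 1 2 + t 0 1 3 * D 0 1 3 + t 0 1 4 * D 0 1 4 + t 0 2 3 * D 0 2 3
        + t 0 2 4 * D 0 2 4 + t 0 3 4 * D 0 3 4 + t 1 2 3 * D 1 2 3 + t 1 2 4 * D 1 2 4
        + t 1 3 4 * D 1 3 4 + t 2 3 4 * D 2 3 4 := by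
  -- The guards `j < i`, `k < j` make antisymmetry a terminating rewrite that sorts the indices.
  have g1 : ∀ i j k, j < i → t i j k = -t j i k := fun i j k _ => h1 i j k
  have g2 : ∀ i j k, k < j → t i j k = -t i k j := fun i j k _ => h2 i j k
  have g3 : ∀ i k, t i i k = 0 := fun i k => by linarith [h1 i i k]
  have g4 : ∀ i k, t i k k = 0 := fun i k => by linarith [h2 i k k]
  simp [Fin.sum_univ_five, g1, g2, g3, g4]
  ring

/-- `T` is the sum over `i < j < k` of `T (b i, b j, b k)` times the 3 × 3 minor
`b^i ∧ b^j ∧ b^k`, written out. -/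
lemma alt_expand (T : AlternatingMap ℝ V5 ℝ (Fin 3)) (b : OrthonormalBasis (Fin 5) ℝ V5)
    (X Y Z : V5) :
    T ![X, Y, Z] =
      let D := fun i j k : Fin 5 =>
        c b X i * (c b Y j * c b Z k - c b Y k * c b Z j)
          - c b X j * (c b Y i * c b Z k - c b Y k * c b Z i)
          + c b X k * (c b Y i * c b Z j - c b Y j * c b Z i)
      let t := fun i j k : Fin 5 => T ![b i, b j, b k]
      t 0 1 2 * D 0 1 2 + t 0 1 3 * D 0 1 3 + t 0 1 4 * D 0 1 4 + t 0 2 3 * D 0 2 3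
        + t 0 2 4 * D 0 2 4 + t 0 3 4 * D 0 3 4 + t 1 2 3 * D 1 2 3 + t 1 2 4 * D 1 2 4
        + t 1 3 4 * D 1 3 4 + t 2 3 4 * D 2 3 4 := by
  have hX : ∀ X : V5, X = ∑ i, c b X i • b i := fun X => by
    conv_lhs => rw [← b.sum_repr X]
    simp [c, b.repr_apply_apply, real_inner_comm]
  have hs1 : ∀ x : Fin 5 → ℝ, ∀ U W, T ![U, ∑ i, x i • b i, W] = ∑ i, x i * T ![U, b i, W] := by
    intro x U W
    rw [alt_swap01, alt_sum_smul, ← Finset.sum_neg_distrib]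
    refine Finset.sum_congr rfl fun i _ => ?_
    rw [alt_swap01 T U]; ring
  have hs2 : ∀ x : Fin 5 → ℝ, ∀ U W, T ![U, W, ∑ i, x i • b i] = ∑ i, x i * T ![U, W, b i] := by
    intro x U W
    rw [alt_swap12, hs1, ← Finset.sum_neg_distrib]
    refine Finset.sum_congr rfl fun i _ => ?_
    rw [alt_swap12 T U W]; ring
  conv_lhs => rw [hX X, hX Y, hX Z]
  rw [alt_sum_smul]
  simp_rw [hs1, hs2]
  exact sum_antisymm (fun i j k => T ![b i, b j, b k]) (fun i j k => alt_swap01 T _ _ _)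
    (fun i j k => alt_swap12 T _ _ _) _ _ _

/-! ### Divisibility by a 1-form -/

/-- The odd-dimensional skew matrix `v ↦ v♭ ∧ T` is singular, so some unit vector `v` satisfies
`v♭ ∧ T = 0`. Contracting this identity with `v` recovers `T` as `v♭ ∧ (v ⨼ T)`. -/
lemma exists_divisor (T : AlternatingMap ℝ V5 ℝ (Fin 3)) :
    ∃ v : V5, ‖v‖ = 1 ∧ ∀ X Y Z : V5, T ![X, Y, Z] =
      ⟪v, X⟫ * T ![v, Y, Z] - ⟪v, Y⟫ * T ![v, X, Z] + ⟪v, Z⟫ * T ![v, X, Y] := by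
  let b : OrthonormalBasis (Fin 5) ℝ V5 := EuclideanSpace.basisFun (Fin 5) ℝ
  let t := fun i j k : Fin 5 => T ![b i, b j, b k]
  -- Up to sign, row `r` of `M *ᵥ v` is the component of `v♭ ∧ T` on the indices other than `r`;
  -- the signs are chosen to make `M` skew.
  let M : Matrix (Fin 5) (Fin 5) ℝ :=
    !![0, t 2 3 4, -t 1 3 4, t 1 2 4, -t 1 2 3;
       -t 2 3 4, 0, t 0 3 4, -t 0 2 4, t 0 2 3;
       t 1 3 4, -t 0 3 4, 0, t 0 1 4, -t 0 1 3;
       -t 1 2 4, t 0 2 4, -t 0 1 4, 0, t 0 1 2;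
       t 1 2 3, -t 0 2 3, t 0 1 3, -t 0 1 2, 0]
  have hM : M.transpose = -M := by
    ext i j
    fin_cases i <;> fin_cases j <;> simp [M]
  have hdet : M.det = 0 := by
    have h := Matrix.det_transpose M
    rw [hM, Matrix.det_neg] at h
    norm_num at h
    linarith
  obtain ⟨w, hw0, hw⟩ := Matrix.exists_mulVec_eq_zero_iff.mpr hdet
  obtain ⟨u, hu0, hu⟩ : ∃ u : V5, u ≠ 0 ∧ ∀ i, u i = w i :=
    ⟨WithLp.toLp 2 w, by simpa using hw0, fun _ => rfl⟩
  have hk : ∀ X Y Z : V5, ⟪u, u⟫ * T ![X, Y, Z] =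
      ⟪u, X⟫ * T ![u, Y, Z] - ⟪u, Y⟫ * T ![u, X, Z] + ⟪u, Z⟫ * T ![u, X, Y] := by
    intro X Y Z
    have e0 := congrFun hw 0
    have e1 := congrFun hw 1
    have e2 := congrFun hw 2
    have e3 := congrFun hw 3
    have e4 := congrFun hw 4
    simp only [Matrix.mulVec, dotProduct, Fin.sum_univ_five, ← hu] at e0 e1 e2 e3 e4
    simp [M] at e0 e1 e2 e3 e4
    have hin : ∀ P Q : V5, ⟪P, Q⟫ = P 0 * Q 0 + P 1 * Q 1 + P 2 * Q 2 + P 3 * Q 3 + P 4 * Q 4 := by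
      intro P Q
      simp [PiLp.inner_apply, Fin.sum_univ_five, mul_comm]
    have hc : ∀ (P : V5) i, c b P i = P i := by
      intro P i
      simp [c, b, PiLp.inner_apply]
    rw [alt_expand T b X Y Z, alt_expand T b u Y Z, alt_expand T b u X Z, alt_expand T b u X Y]
    simp only [hc, hin]
    change _ * (t 0 1 2 * _ + t 0 1 3 * _ + t 0 1 4 * _ + t 0 2 3 * _
        + t 0 2 4 * _ + t 0 3 4 * _ + t 1 2 3 * _ + t 1 2 4 * _
        + t 1 3 4 * _ + t 2 3 4 * _) = _ * (t 0 1 2 * _ + t 0 1 3 * _ + t 0 1 4 * _ + t 0 2 3 * _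
        + t 0 2 4 * _ + t 0 3 4 * _ + t 1 2 3 * _ + t 1 2 4 * _
        + t 1 3 4 * _ + t 2 3 4 * _) - _ * (t 0 1 2 * _ + t 0 1 3 * _ + t 0 1 4 * _ + t 0 2 3 * _
        + t 0 2 4 * _ + t 0 3 4 * _ + t 1 2 3 * _ + t 1 2 4 * _
        + t 1 3 4 * _ + t 2 3 4 * _) + _ * (t 0 1 2 * _ + t 0 1 3 * _ + t 0 1 4 * _ + t 0 2 3 * _
        + t 0 2 4 * _ + t 0 3 4 * _ + t 1 2 3 * _ + t 1 2 4 * _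
        + t 1 3 4 * _ + t 2 3 4 * _)
    -- The difference of the sides is `(u♭ ∧ T)(u, X, Y, Z)`: each component of `u♭ ∧ T` is
    -- a row of `M u`, and multiplies the 4 × 4 minor of `(u, X, Y, Z)` omitting that column.
    obtain ⟨m, hm⟩ : ∃ m : Fin 5 → Fin 5 → Fin 5 → Fin 5 → ℝ, ∀ i j k l, m i j k l =
        u i * (X j * (Y k * Z l - Y l * Z k) - X k * (Y j * Z l - Y l * Z j)
          + X l * (Y j * Z k - Y k * Z j))
        - u j * (X i * (Y k * Z l - Y l * Z k) - X k * (Y i * Z l - Y l * Z i)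
          + X l * (Y i * Z k - Y k * Z i))
        + u k * (X i * (Y j * Z l - Y l * Z j) - X j * (Y i * Z l - Y l * Z i)
          + X l * (Y i * Z j - Y j * Z i))
        - u l * (X i * (Y j * Z k - Y k * Z j) - X j * (Y i * Z k - Y k * Z i)
          + X k * (Y i * Z j - Y j * Z i)) := ⟨_, fun _ _ _ _ => rfl⟩
    linear_combination (norm := skip) m 1 2 3 4 * e0 - m 0 2 3 4 * e1 + m 0 1 3 4 * e2
      - m 0 1 2 4 * e3 + m 0 1 2 3 * e4
    simp only [hm]
    ring
  have hn : ‖u‖ ≠ 0 := norm_ne_zero_iff.mpr hu0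
  have hsm : ∀ (r : ℝ) (Y Z : V5), T ![r • u, Y, Z] = r * T ![u, Y, Z] := fun r Y Z =>
    T.toMultilinearMap.cons_smul ![Y, Z] r u
  refine ⟨‖u‖⁻¹ • u, by simp [norm_smul, hn], fun X Y Z => ?_⟩
  have h := hk X Y Z
  rw [real_inner_self_eq_norm_sq] at h
  simp only [hsm, real_inner_smul_left]
  field_simp
  linarith

/-! ### Normal form of a skew bilinear form with a given kernel vector -/

lemma exists_operator (ω : V5 →ₗ[ℝ] V5 →ₗ[ℝ] ℝ) :
    ∃ A : V5 →ₗ[ℝ] V5, ∀ X Y, ⟪A X, Y⟫ = ω X Y :=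
  ⟨{ toFun := fun X => (InnerProductSpace.toDual ℝ V5).symm (LinearMap.toContinuousLinearMap (ω X))
     map_add' := fun X Y => by simp
     map_smul' := fun r X => by simp },
    fun X Y => by simp [InnerProductSpace.toDual_symm_apply]⟩

/-- A skew form with kernel vector `v` vanishes between two orthogonal planes spanning `v^⊥`.
The representing operator `A` is skew-adjoint, so `A²` is self-adjoint, and an eigenvector `u` of
`A²` with nonzero eigenvalue spans together with `A u` an `A`-invariant plane orthogonal to
`ker A`; the orthogonal complement of that plane is then `A`-invariant as well. -/
lemma skew_normal_form (ω : V5 →ₗ[ℝ] V5 →ₗ[ℝ] ℝ) (hω : ∀ X Y, ω X Y = -ω Y X)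
    (v : V5) (hv : ‖v‖ = 1) (hωv : ∀ Y, ω v Y = 0) :
    ∃ b : OrthonormalBasis (Fin 5) ℝ V5, b 4 = v ∧ ω (b 0) (b 2) = 0 ∧ ω (b 0) (b 3) = 0
      ∧ ω (b 1) (b 2) = 0 ∧ ω (b 1) (b 3) = 0 := by
  obtain ⟨A, hA⟩ := exists_operator ω
  have hskew : ∀ X Y, ⟪A X, Y⟫ = -⟪X, A Y⟫ := fun X Y => by
    rw [hA, hω, ← hA, real_inner_comm]
  have hAv : A v = 0 := by
    apply ext_inner_right ℝ
    intro Y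
    rw [hA, hωv, inner_zero_left]
  have hsymm : (A ∘ₗ A).IsSymmetric := fun X Y => by
    simp [hskew]
  have hcard : Module.finrank ℝ V5 = Fintype.card (Fin 5) := by simp
  by_cases h : ∃ i, hsymm.eigenvalues (n := 5) (by simp) i ≠ 0
  · obtain ⟨i, hi⟩ := h
    set μ := hsymm.eigenvalues (n := 5) (by simp) i
    have hu := hsymm.apply_eigenvectorBasis (n := 5) (by simp) i
    have hu1 := (hsymm.eigenvectorBasis (n := 5) (by simp)).orthonormal.1 i
    set u := hsymm.eigenvectorBasis (n := 5) (by simp) i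
    replace hu : A (A u) = μ • u := hu
    have hAu : A u ≠ 0 := by
      intro h0
      rw [h0, map_zero] at hu
      have : u ≠ 0 := by
        intro h0; rw [h0] at hu1; simp at hu1
      exact (smul_ne_zero hi this) hu.symm
    have hn : ‖A u‖ ≠ 0 := norm_ne_zero_iff.mpr hAu
    have huAu : ⟪u, A u⟫ = 0 := by
      have := hskew u u
      rw [real_inner_comm] at this
      linarith
    have hAuv : ⟪A u, v⟫ = 0 := by rw [hskew, hAv, inner_zero_right, neg_zero]
    have huv : ⟪u, v⟫ = 0 := by
      have h1 : ⟪A (A u), v⟫ = 0 := by rw [hskew, hAv, inner_zero_right, neg_zero]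
      rw [hu, real_inner_smul_left] at h1
      exact (mul_eq_zero.mp h1).resolve_left hi
    have hAuu : ⟪A u, u⟫ = 0 := by rw [real_inner_comm, huAu]
    have hvAu : ⟪v, A u⟫ = 0 := by rw [real_inner_comm, hAuv]
    have hvu : ⟪v, u⟫ = 0 := by rw [real_inner_comm, huv]
    let f : Fin 5 → V5 := ![u, ‖A u‖⁻¹ • A u, 0, 0, v]
    have hf : Orthonormal ℝ (({0, 1, 4} : Set (Fin 5)).domRestrict f) := by
      constructor
      · rintro ⟨j, hj⟩
        rcases hj with rfl | rfl | rfl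
        · simpa [f, Set.domRestrict_apply] using hu1
        · simp [f, Set.domRestrict_apply, norm_smul, hn]
        · simpa [f, Set.domRestrict_apply] using hv
      · rintro ⟨j, hj⟩ ⟨k, hk⟩ hjk
        rcases hj with rfl | rfl | rfl <;> rcases hk with rfl | rfl | rfl <;>
          first
          | exact absurd rfl hjk
          | simp [f, Set.domRestrict_apply, real_inner_smul_left, real_inner_smul_right,
              huAu, hAuv, huv, hAuu, hvAu, hvu]
    obtain ⟨b, hb⟩ := hf.exists_orthonormalBasis_extension_of_card_eq hcard
    have b0 : b 0 = u := hb 0 (by simp)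
    have b1 : b 1 = ‖A u‖⁻¹ • A u := hb 1 (by simp)
    have b4 : b 4 = v := hb 4 (by simp)
    have hA0 : A (b 0) = ‖A u‖ • b 1 := by rw [b0, b1, smul_smul, mul_inv_cancel₀ hn, one_smul]
    have hA1 : A (b 1) = (‖A u‖⁻¹ * μ) • b 0 := by rw [b0, b1, map_smul, hu, smul_smul]
    refine ⟨b, b4, ?_, ?_, ?_, ?_⟩ <;> rw [← hA] <;>
      simp [hA0, hA1, real_inner_smul_left, b.inner_eq_ite]
  -- If all eigenvalues of `A²` vanish, then `‖A X‖² = -⟪X, A² X⟫ = 0`, so `ω = 0`.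
  · push Not at h
    have hS : ∀ X, A (A X) = 0 := by
      have : A ∘ₗ A = 0 := by
        apply (hsymm.eigenvectorBasis (n := 5) (by simp)).toBasis.ext
        intro i
        rw [OrthonormalBasis.coe_toBasis, hsymm.apply_eigenvectorBasis, h i]
        simp
      exact fun X => LinearMap.congr_fun this X
    have hA0 : ∀ X Y, ω X Y = 0 := by
      intro X Y
      have : ⟪A X, A X⟫ = 0 := by rw [hskew, hS, inner_zero_right, neg_zero]
      rw [← hA, inner_self_eq_zero.mp this, inner_zero_left]
    have hf : Orthonormal ℝ (({4} : Set (Fin 5)).domRestrict (fun _ => v)) := by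
      constructor
      · rintro ⟨j, hj⟩
        exact hv
      · rintro ⟨j, hj⟩ ⟨k, hk⟩ hjk
        rcases hj with rfl
        rcases hk with rfl
        exact absurd rfl hjk
    obtain ⟨b, hb⟩ := hf.exists_orthonormalBasis_extension_of_card_eq hcard
    exact ⟨b, hb 4 rfl, hA0 _ _, hA0 _ _, hA0 _ _, hA0 _ _⟩

/-! ### The adapted basis -/

/-- All components of `T` in the basis `b` vanish, except possibly those on `(0, 1, 4)` and
`(2, 3, 4)` (up to permutation). -/
def IsAdapted (b : OrthonormalBasis (Fin 5) ℝ V5) (T : AlternatingMap ℝ V5 ℝ (Fin 3)) : Prop :=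
  T ![b 0, b 1, b 2] = 0 ∧ T ![b 0, b 1, b 3] = 0 ∧ T ![b 0, b 2, b 3] = 0
    ∧ T ![b 0, b 2, b 4] = 0 ∧ T ![b 0, b 3, b 4] = 0 ∧ T ![b 1, b 2, b 3] = 0
    ∧ T ![b 1, b 2, b 4] = 0 ∧ T ![b 1, b 3, b 4] = 0

lemma exists_adapted (T : AlternatingMap ℝ V5 ℝ (Fin 3)) :
    ∃ b : OrthonormalBasis (Fin 5) ℝ V5, IsAdapted b T := by
  obtain ⟨v, hv, hT⟩ := exists_divisor T
  have hcyc : ∀ X Y Z, T ![X, Y, Z] = T ![Z, X, Y] := fun X Y Z => by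
    rw [alt_swap12, alt_swap01, neg_neg]
  let ω : V5 →ₗ[ℝ] V5 →ₗ[ℝ] ℝ := LinearMap.mk₂ ℝ (fun X Y => T ![v, X, Y])
    (fun X X' Y => by
      simp only [← hcyc _ _ v]
      exact T.toMultilinearMap.cons_add ![Y, v] X X')
    (fun r X Y => by
      simp only [← hcyc _ _ v]
      exact T.toMultilinearMap.cons_smul ![Y, v] r X)
    (fun X Y Y' => by
      simp only [hcyc v X]
      exact T.toMultilinearMap.cons_add ![v, X] Y Y')
    (fun r X Y => by
      simp only [hcyc v X]
      exact T.toMultilinearMap.cons_smul ![v, X] r Y)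
  have hω : ∀ X Y, ω X Y = T ![v, X, Y] := fun _ _ => rfl
  obtain ⟨b, rfl, h02, h03, h12, h13⟩ := skew_normal_form ω
    (fun X Y => by rw [hω, hω, alt_swap12]) v hv
    (fun Y => by rw [hω]; linarith [alt_swap01 T v v Y])
  rw [hω] at h02 h03 h12 h13
  refine ⟨b, ?_, ?_, ?_, ?_, ?_, ?_, ?_, ?_⟩
  · rw [hT]; simp [b.inner_eq_ite]
  · rw [hT]; simp [b.inner_eq_ite]
  · rw [hT]; simp [b.inner_eq_ite]
  · rw [hcyc, h02]
  · rw [hcyc, h03]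
  · rw [hT]; simp [b.inner_eq_ite]
  · rw [hcyc, h12]
  · rw [hcyc, h13]

/-- Since the dimension is odd, one of `b` and `-b` is positively oriented. -/
lemma exists_positive_adapted (T : AlternatingMap ℝ V5 ℝ (Fin 3)) :
    ∃ b : OrthonormalBasis (Fin 5) ℝ V5, PositivelyOriented b ∧ IsAdapted b T := by
  obtain ⟨b, hb⟩ := exists_adapted T
  let M : Matrix (Fin 5) (Fin 5) ℝ :=
    Matrix.of fun i j : Fin 5 => ⟪b i, EuclideanSpace.single j (1 : ℝ)⟫
  have hM0 : M.det ≠ 0 := by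
    -- `M` is orthogonal, by Parseval's identity in the standard basis.
    have hMM : M * M.transpose = 1 := by
      ext i j
      have h := (EuclideanSpace.basisFun (Fin 5) ℝ).sum_inner_mul_inner (b i) (b j)
      rw [b.inner_eq_ite] at h
      simp only [EuclideanSpace.basisFun_apply] at h
      simp only [Matrix.mul_apply, Matrix.transpose_apply, Matrix.one_apply, M, Matrix.of_apply]
      rw [← h]
      exact Finset.sum_congr rfl fun k _ => by rw [real_inner_comm (b j)]
    intro h0
    have := congrArg Matrix.det hMM
    rw [Matrix.det_mul, h0, zero_mul, Matrix.det_one] at this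
    exact zero_ne_one this
  rcases lt_or_gt_of_ne hM0 with hneg | hpos
  · let b' := b.map (LinearIsometryEquiv.neg ℝ)
    have hb' : ∀ i, b' i = -b i := fun i => by simp [b']
    have hTneg : ∀ X Y Z, T ![-X, -Y, -Z] = -T ![X, Y, Z] := fun X Y Z => by
      have h := T.map_smul_univ (fun _ => -1) ![X, Y, Z]
      simp only [Fin.prod_univ_three] at h
      norm_num at h
      rw [← h]
      congr 1
      ext i : 1
      fin_cases i <;> rfl
    refine ⟨b', ?_, ?_⟩
    · have : (Matrix.of fun i j : Fin 5 => ⟪b' i, EuclideanSpace.single j (1 : ℝ)⟫) = -M := by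
        ext i j
        simp only [hb', M, Matrix.of_apply, inner_neg_left, Matrix.neg_apply]
      rw [PositivelyOriented, this, Matrix.det_neg]
      norm_num
      exact hneg
    · simpa only [IsAdapted, hb', hTneg, neg_eq_zero] using hb
  · exact ⟨b, hpos, hb⟩

/-! ### The normal form -/

theorem normal_form_three_form_dim_five (T : AlternatingMap ℝ V5 ℝ (Fin 3)) :
    ∃ (b : OrthonormalBasis (Fin 5) ℝ V5) (ρ lam : ℝ),
      PositivelyOriented b
      ∧ (∀ X Y Z, T ![X, Y, Z]
          = -(ρ * d3 b ![0, 1, 4] X Y Z + lam * d3 b ![2, 3, 4] X Y Z))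
      ∧ (∀ X Y, star3 b T X Y
          = -(ρ * d2 b ![2, 3] X Y + lam * d2 b ![0, 1] X Y))
      ∧ (∀ X Y Z W, sigmaT b T X Y Z W = ρ * lam * d4 b ![0, 1, 2, 3] X Y Z W) := by
  obtain ⟨b, hpos, h012, h013, h023, h024, h034, h123, h124, h134⟩ := exists_positive_adapted T
  obtain ⟨ρ, hρ⟩ : ∃ ρ : ℝ, T ![b 0, b 1, b 4] = -ρ := ⟨_, (neg_neg _).symm⟩
  obtain ⟨l, hl⟩ : ∃ l : ℝ, T ![b 2, b 3, b 4] = -l := ⟨_, (neg_neg _).symm⟩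
  have hT : ∀ X Y Z, T ![X, Y, Z]
      = -(ρ * d3 b ![0, 1, 4] X Y Z + l * d3 b ![2, 3, 4] X Y Z) := by
    intro X Y Z
    rw [alt_expand T b X Y Z]
    simp only [h012, h013, h023, h024, h034, h123, h124, h134, hρ, hl, d3, Matrix.det_fin_three]
    simp
    ring
  have hcb : ∀ i j, c b (b i) j = if i = j then 1 else 0 := fun i j => by
    rw [c, b.inner_eq_ite]
  refine ⟨b, ρ, l, hpos, hT, ?_, ?_⟩
  · intro X Y
    simp only [star3, hT]
    simp [Fin.sum_univ_five, d3, Matrix.det_fin_three, hcb]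
    simp [eps, d2, Matrix.det_succ_row_zero, Fin.sum_univ_succ, Fin.succAbove]
    ring
  · intro X Y Z W
    simp only [sigmaT, hT]
    simp [Fin.sum_univ_five, d3, Matrix.det_fin_three, hcb]
    simp [d4, Matrix.det_succ_row_zero, Fin.sum_univ_succ, Fin.succAbove]
    ring

end
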